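/- Let (X_i)_{i≥1} be i.i.d. standard normal and X_{(n)} = max_{1≤i≤n} X_i. Let a_n = √(2 log n), c_n = log(√(4π log n)), and b_n = a_n - c_n/a_n - (c_n² - 2c_n)/(2a_n³). Then, as n → ∞, sup_{x∈ℝ} |P(X_{(n)} ≤ b_n + x/a_n) - exp(-e^{-x})| = (d₂ log log n/(4 log n))(1 + o(1)), where d₂ = sup_{x∈ℝ} |x| exp(-e^{-x}) e^{-x}. -/

import Mathlib

open MeasureTheory Filter Real

/-- The standard normal cumulative distribution function. -/
noncomputable def stdNormalCDF (x : ℝ) : ℝ :=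
  ∫ t in Set.Iic x, Real.exp (-t ^ 2 / 2) / Real.sqrt (2 * Real.pi)

/-- The standard normal density. -/
noncomputable def stdNormalPDF (x : ℝ) : ℝ :=
  Real.exp (-x ^ 2 / 2) / Real.sqrt (2 * Real.pi)

/-- Scaling constant `a_n = √(2 log n)`. -/
noncomputable def aSeq (n : ℕ) : ℝ := Real.sqrt (2 * Real.log n)

/-- Centering constant
`b_n = √(2 log n) - (log log n + log (4π)) / (2 √(2 log n))`. -/
noncomputable def bSeq (n : ℕ) : ℝ :=
  aSeq n - (Real.log (Real.log n) + Real.log (4 * Real.pi)) / (2 * aSeq n)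

/-- `c_n = log (√(4 π log n))`. -/
noncomputable def cSeq (n : ℕ) : ℝ := Real.log (Real.sqrt (4 * Real.pi * Real.log n))

/-- The CDF of `Y_n = a_n (X_{(n)} - b_n)` where `X_{(n)}` is the maximum of `n`
i.i.d. standard normal random variables: `P(Y_n ≤ x) = Φ(b_n + x/a_n)^n`. -/
noncomputable def Fmax (n : ℕ) (x : ℝ) : ℝ := stdNormalCDF (bSeq n + x / aSeq n) ^ n

/-- The density of `Y_n = a_n (X_{(n)} - b_n)`:
`f_n(x) = n a_n⁻¹ φ(b_n + x/a_n) Φ(b_n + x/a_n)^{n-1}`. -/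
noncomputable def fmax (n : ℕ) (x : ℝ) : ℝ :=
  n * (aSeq n)⁻¹ * stdNormalPDF (bSeq n + x / aSeq n) *
    stdNormalCDF (bSeq n + x / aSeq n) ^ (n - 1)

/-- The density of the standard Gumbel distribution. -/
noncomputable def gumbelPDF (x : ℝ) : ℝ := Real.exp (-x - Real.exp (-x))

/-- Refined centering `b_n = a_n - c_n/a_n - (c_n² - 2c_n)/(2a_n³)`. -/
noncomputable def bSeq3 (n : ℕ) : ℝ :=
  aSeq n - cSeq n / aSeq n - ((cSeq n) ^ 2 - 2 * cSeq n) / (2 * (aSeq n) ^ 3)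

/-!
Write `u_n(x) = b_n + x / a_n` and `n (1 - Φ(u_n(x))) = exp(-(x - h))`. Mills' ratio with its
first-order correction and the expansion of `u_n(x)²` give `h = c_n x / a_n² + O((1 + x²) / a_n²)`
for `x = O(c_n)`: the third-order term of `b_n` is what cancels `c_n²` here. Since
`Φ(u_n(x))^n = exp(-n (1 - Φ(u_n(x)))) + O(1 / n) = Λ(x - h) + O(1 / n)`, a Taylor expansion of the
Gumbel distribution function `Λ` yields `Λ(x) - (c_n / a_n²) x Λ'(x) + O(1 / a_n²)`, uniformly on
`|x| ≤ 2 c_n`. Outside this range monotonicity suffices, as `exp(-2 c_n) = 1 / (2 π a_n²)`. Hence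
the uniform distance is `(c_n / a_n²) d₂ + O(1 / a_n²)`, where
`c_n / a_n² = (log log n + log (4 π)) / (4 log n)`.
-/

open ProbabilityTheory Asymptotics
open scoped Topology NNReal

section RealInequalities

lemma sq_sub_self_le_exp {t : ℝ} (ht : 0 ≤ t) : t ^ 2 - t ≤ exp t := by
  have := sum_le_exp_of_nonneg ht 4
  norm_num [Finset.sum_range_succ, Nat.factorial] at this
  nlinarith [mul_nonneg ht (sq_nonneg (t - 2))]

lemma sq_mul_exp_neg_le_two {t : ℝ} (ht : 0 ≤ t) : t ^ 2 * exp (-t) ≤ 2 := by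
  have := pow_div_factorial_le_exp t ht 2
  rw [exp_neg, ← div_eq_mul_inv, div_le_iff₀ (exp_pos t)]
  norm_num at this
  linarith

lemma abs_log_one_add_sub_le {r : ℝ} (hr : |r| ≤ 1 / 2) : |log (1 + r) - r| ≤ 2 * r ^ 2 := by
  have h := abs_log_sub_add_sum_range_le (x := -r) (by rw [abs_neg]; linarith) 1
  simp only [Finset.sum_range_one, zero_add, pow_one, Nat.cast_zero, div_one, sub_neg_eq_add,
    abs_neg, one_add_one_eq_two, sq_abs] at h
  calc |log (1 + r) - r| ≤ r ^ 2 / (1 - |r|) := by convert h using 2; ring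
    _ ≤ 2 * r ^ 2 := by
      rw [div_le_iff₀ (by linarith)]
      nlinarith [sq_nonneg r]

lemma one_sub_pow_le_exp_neg_mul {q : ℝ} (hq : q ≤ 1) (n : ℕ) : (1 - q) ^ n ≤ exp (-(n * q)) :=
  calc (1 - q) ^ n ≤ exp (-q) ^ n := pow_le_pow_left₀ (sub_nonneg.2 hq) (one_sub_le_exp_neg q) n
    _ = exp (-(n * q)) := by rw [← exp_nat_mul, mul_neg]

lemma exp_neg_mul_mul_le_one_sub_pow {q : ℝ} (hq₀ : 0 ≤ q) (hq₁ : q ≤ 1) (n : ℕ) :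
    exp (-(n * q)) * (1 - n * q ^ 2) ≤ (1 - q) ^ n := by
  have hq_sq : q ^ 2 ≤ 1 := pow_le_one₀ hq₀ hq₁
  have hbernoulli : 1 - n * q ^ 2 ≤ (1 - q ^ 2) ^ n := by
    simpa [sub_eq_add_neg] using one_add_mul_le_pow (a := -q ^ 2) (by linarith) n
  have hexp : (1 + q) ^ n ≤ exp (n * q) := by
    rw [exp_nat_mul]
    exact pow_le_pow_left₀ (by positivity) (by linarith [add_one_le_exp q]) n
  calc exp (-(n * q)) * (1 - n * q ^ 2)
      ≤ exp (-(n * q)) * ((1 + q) ^ n * (1 - q) ^ n) := by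
        rw [← mul_pow, show (1 + q) * (1 - q) = 1 - q ^ 2 by ring]
        gcongr
    _ ≤ exp (-(n * q)) * (exp (n * q) * (1 - q) ^ n) := by
        have := sub_nonneg.2 hq₁
        gcongr
    _ = (1 - q) ^ n := by rw [← mul_assoc, ← exp_add, neg_add_cancel, exp_zero, one_mul]

lemma abs_one_sub_pow_sub_exp_le {q : ℝ} (hq₀ : 0 ≤ q) (hq₁ : q ≤ 1) {n : ℕ} (hn : n ≠ 0) :
    |(1 - q) ^ n - exp (-(n * q))| ≤ 2 / n := by
  have hn' : (0 : ℝ) < n := by positivity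
  have hupper := one_sub_pow_le_exp_neg_mul hq₁ n
  have hlower := exp_neg_mul_mul_le_one_sub_pow hq₀ hq₁ n
  have hgap : exp (-(n * q)) * (n * q ^ 2) ≤ 2 / n := by
    rw [le_div_iff₀ hn']
    linarith [sq_mul_exp_neg_le_two (mul_nonneg hn'.le hq₀)]
  rw [abs_of_nonpos (sub_nonpos.2 hupper)]
  linarith

lemma norm_sub_sub_smul_le_of_lipschitzWith_deriv {E : Type*} [NormedAddCommGroup E]
    [NormedSpace ℝ E] {f f' : ℝ → E} {K : ℝ≥0} (hf : ∀ x, HasDerivAt f (f' x) x)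
    (hf' : LipschitzWith K f') (x y : ℝ) :
    ‖f y - f x - (y - x) • f' x‖ ≤ K * (y - x) ^ 2 := by
  have hderiv : ∀ t, HasDerivAt (fun t ↦ f t - t • f' x) (f' t - f' x) t := fun t ↦ by
    simpa using! (hf t).sub ((hasDerivAt_id t).smul_const (f' x))
  have hbound : ∀ t ∈ Set.uIcc x y, ‖f' t - f' x‖ ≤ K * |y - x| := fun t ht ↦ by
    refine (hf'.norm_sub_le t x).trans ?_
    gcongr
    exact Set.abs_sub_left_of_mem_uIcc ht
  have h := (convex_uIcc x y).norm_image_sub_le_of_norm_hasDerivWithin_le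
    (fun t _ ↦ (hderiv t).hasDerivWithinAt) hbound Set.left_mem_uIcc Set.right_mem_uIcc
  rw [norm_eq_abs, mul_assoc, abs_mul_abs_self, ← sq] at h
  convert h using 2
  module

lemma abs_sub_le_of_monotone_of_abs_sub_le {α : Type*} [LinearOrder α] {F G : α → ℝ} {a b : α}
    {δ : ℝ} (hF : Monotone F) (hF₀ : ∀ x, 0 ≤ F x) (hF₁ : ∀ x, F x ≤ 1) (hab : a ≤ b)
    (hmid : ∀ x ∈ Set.Icc a b, |F x - G x| ≤ δ) (hleft : ∀ x ≤ a, |G x| ≤ δ)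
    (hright : ∀ x ≥ b, |1 - G x| ≤ δ) (x : α) : |F x - G x| ≤ 3 * δ := by
  rcases le_total x a with hx | hx
  · have := hF hx
    grind [hleft x hx, hleft a le_rfl, hmid a (Set.left_mem_Icc.2 hab), hF₀ x]
  rcases le_total b x with hx' | hx'
  · have := hF hx'
    grind [hright x hx', hright b le_rfl, hmid b (Set.right_mem_Icc.2 hab), hF₁ x]
  · linarith [hmid x ⟨hx, hx'⟩, abs_nonneg (F x - G x)]

lemma abs_iSup_sub_iSup_le {ι : Sort*} [Nonempty ι] {f g : ι → ℝ} {δ : ℝ}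
    (hg : BddAbove (Set.range g)) (h : ∀ i, |f i - g i| ≤ δ) :
    |(⨆ i, f i) - ⨆ i, g i| ≤ δ := by
  have hf : BddAbove (Set.range f) := by
    refine ⟨(⨆ i, g i) + δ, Set.forall_mem_range.2 fun i ↦ ?_⟩
    linarith [le_ciSup hg i, le_of_abs_le (h i)]
  have hfg : (⨆ i, f i) ≤ (⨆ i, g i) + δ := ciSup_le fun i ↦ by
    linarith [le_ciSup hg i, le_of_abs_le (h i)]
  have hgf : (⨆ i, g i) ≤ (⨆ i, f i) + δ := ciSup_le fun i ↦ by
    linarith [le_ciSup hf i, neg_le_of_abs_le (h i)]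
  rw [abs_le]
  constructor <;> linarith

end RealInequalities

section StandardNormal

lemma stdNormalPDF_eq_gaussianPDFReal : stdNormalPDF = gaussianPDFReal 0 1 := by
  ext x
  simp only [stdNormalPDF, gaussianPDFReal, sub_zero, NNReal.coe_one, mul_one]
  rw [div_eq_inv_mul]

lemma stdNormalPDF_pos (x : ℝ) : 0 < stdNormalPDF x := by
  unfold stdNormalPDF
  positivity

lemma integrable_stdNormalPDF : Integrable stdNormalPDF :=
  stdNormalPDF_eq_gaussianPDFReal ▸ integrable_gaussianPDFReal 0 1

lemma hasDerivAt_stdNormalPDF (x : ℝ) : HasDerivAt stdNormalPDF (-x * stdNormalPDF x) x := by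
  have h : HasDerivAt (fun t : ℝ ↦ -t ^ 2 / 2) (-x) x :=
    (((hasDerivAt_pow 2 x).neg).div_const 2).congr_deriv (by push_cast; ring)
  exact (h.exp.div_const _).congr_deriv (by unfold stdNormalPDF; ring)

lemma tendsto_stdNormalPDF_atTop : Tendsto stdNormalPDF atTop (𝓝 0) := by
  have h : Tendsto (fun t : ℝ ↦ -t ^ 2 / 2) atTop atBot :=
    (tendsto_neg_atTop_atBot.comp (tendsto_pow_atTop two_ne_zero)).atBot_div_const two_pos
  simpa only [zero_div] using! (tendsto_exp_atBot.comp h).div_const √(2 * π)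

lemma stdNormalCDF_eq_cdf (x : ℝ) : stdNormalCDF x = cdf (gaussianReal 0 1) x := by
  have hnonneg : 0 ≤ ∫ t in Set.Iic x, gaussianPDFReal 0 1 t :=
    integral_nonneg fun t ↦ gaussianPDFReal_nonneg 0 1 t
  rw [cdf_eq_real, measureReal_def, gaussianReal_apply_eq_integral 0 one_ne_zero,
    ENNReal.toReal_ofReal hnonneg, ← stdNormalPDF_eq_gaussianPDFReal]
  rfl

lemma stdNormalCDF_nonneg (x : ℝ) : 0 ≤ stdNormalCDF x :=
  stdNormalCDF_eq_cdf x ▸ cdf_nonneg _ x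

lemma stdNormalCDF_le_one (x : ℝ) : stdNormalCDF x ≤ 1 :=
  stdNormalCDF_eq_cdf x ▸ cdf_le_one _ x

lemma monotone_stdNormalCDF : Monotone stdNormalCDF := by
  rw [funext stdNormalCDF_eq_cdf]
  exact monotone_cdf _

lemma one_sub_stdNormalCDF (x : ℝ) :
    1 - stdNormalCDF x = ∫ t in Set.Ioi x, stdNormalPDF t := by
  rw [sub_eq_iff_eq_add', ← integral_gaussianPDFReal_eq_one 0 one_ne_zero,
    ← stdNormalPDF_eq_gaussianPDFReal]
  exact (intervalIntegral.integral_Iic_add_Ioi integrable_stdNormalPDF.integrableOn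
    integrable_stdNormalPDF.integrableOn).symm

lemma one_sub_stdNormalCDF_le {x : ℝ} (hx : 0 < x) :
    1 - stdNormalCDF x ≤ stdNormalPDF x / x := by
  have hderiv : ∀ t ∈ Set.Ici x, HasDerivAt (fun t ↦ -stdNormalPDF t) (t * stdNormalPDF t) t :=
    fun t _ ↦ (hasDerivAt_stdNormalPDF t).neg.congr_deriv (by ring)
  have hnonneg : ∀ t ∈ Set.Ioi x, 0 ≤ t * stdNormalPDF t := fun t ht ↦
    mul_nonneg (hx.trans ht).le (stdNormalPDF_pos t).le
  have hlim : Tendsto (fun t ↦ -stdNormalPDF t) atTop (𝓝 0) := by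
    simpa using tendsto_stdNormalPDF_atTop.neg
  rw [one_sub_stdNormalCDF, le_div_iff₀' hx, ← integral_const_mul]
  calc ∫ t in Set.Ioi x, x * stdNormalPDF t
      ≤ ∫ t in Set.Ioi x, t * stdNormalPDF t :=
        setIntegral_mono_on (integrable_stdNormalPDF.const_mul x).integrableOn
          (integrableOn_Ioi_deriv_of_nonneg' hderiv hnonneg hlim) measurableSet_Ioi
          fun t ht ↦ mul_le_mul_of_nonneg_right (Set.mem_Ioi.1 ht).le (stdNormalPDF_pos t).le
    _ = stdNormalPDF x := by
        rw [integral_Ioi_of_hasDerivAt_of_nonneg' hderiv hnonneg hlim, sub_neg_eq_add, zero_add]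

-- Gordon's bound. The weight `1 - 2 / (1 + t²)²` is at most `1`, and `φ` times it has the
-- primitive `-t φ(t) / (1 + t²)`.
lemma div_mul_stdNormalPDF_le_one_sub_stdNormalCDF (x : ℝ) :
    x / (1 + x ^ 2) * stdNormalPDF x ≤ 1 - stdNormalCDF x := by
  have hpos : ∀ t : ℝ, 0 < 1 + t ^ 2 := fun t ↦ by positivity
  have hderiv : ∀ t ∈ Set.Ici x, HasDerivAt (fun t ↦ -(t / (1 + t ^ 2) * stdNormalPDF t))
      ((1 - 2 / (1 + t ^ 2) ^ 2) * stdNormalPDF t) t := fun t _ ↦ by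
    have hquot := (hasDerivAt_id t).div ((hasDerivAt_pow 2 t).const_add 1) (hpos t).ne'
    refine (hquot.mul (hasDerivAt_stdNormalPDF t)).neg.congr_deriv ?_
    have := (hpos t).ne'
    simp only [id_eq, Pi.div_apply]
    field_simp
    ring
  have hint : Integrable fun t ↦ (1 - 2 / (1 + t ^ 2) ^ 2) * stdNormalPDF t := by
    refine integrable_stdNormalPDF.bdd_mul (c := 1)
      (Continuous.aestronglyMeasurable ?_) (.of_forall fun t ↦ ?_)
    · fun_prop (disch := intro t; positivity)
    · have hle : 2 / (1 + t ^ 2) ^ 2 ≤ 2 := div_le_self zero_le_two (by nlinarith [sq_nonneg t])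
      have hnonneg : 0 ≤ 2 / (1 + t ^ 2) ^ 2 := by positivity
      rw [norm_eq_abs, abs_le]
      constructor <;> linarith
  have hlim : Tendsto (fun t ↦ -(t / (1 + t ^ 2) * stdNormalPDF t)) atTop (𝓝 0) := by
    refine squeeze_zero_norm (fun t ↦ ?_) tendsto_stdNormalPDF_atTop
    rw [norm_neg, norm_mul, norm_of_nonneg (stdNormalPDF_pos t).le]
    refine mul_le_of_le_one_left (stdNormalPDF_pos t).le ?_
    rw [norm_eq_abs, abs_div, abs_of_pos (hpos t), div_le_one (hpos t), ← sq_abs]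
    nlinarith [sq_nonneg (|t| - 1), abs_nonneg t]
  rw [one_sub_stdNormalCDF]
  calc x / (1 + x ^ 2) * stdNormalPDF x
      = ∫ t in Set.Ioi x, (1 - 2 / (1 + t ^ 2) ^ 2) * stdNormalPDF t := by
        rw [integral_Ioi_of_hasDerivAt_of_tendsto' hderiv hint.integrableOn hlim]
        ring
    _ ≤ ∫ t in Set.Ioi x, stdNormalPDF t := by
        refine setIntegral_mono hint.integrableOn integrable_stdNormalPDF.integrableOn fun t ↦ ?_
        exact mul_le_of_le_one_left (stdNormalPDF_pos t).le (sub_le_self _ (by positivity))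

lemma stdNormalCDF_lt_one {x : ℝ} (hx : 0 < x) : stdNormalCDF x < 1 :=
  sub_pos.1 <| (mul_pos (by positivity) (stdNormalPDF_pos x)).trans_le
    (div_mul_stdNormalPDF_le_one_sub_stdNormalCDF x)

lemma log_stdNormalPDF_div {x : ℝ} (hx : 0 < x) :
    log (stdNormalPDF x / x) = -x ^ 2 / 2 - log (√(2 * π) * x) := by
  rw [stdNormalPDF, div_div, log_div (exp_ne_zero _) (by positivity), log_exp]

lemma abs_log_one_sub_stdNormalCDF_add_le {x : ℝ} (hx : 0 < x) :
    |log (1 - stdNormalCDF x) + x ^ 2 / 2 + log (√(2 * π) * x)| ≤ (x ^ 2)⁻¹ := by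
  have htail : 0 < 1 - stdNormalCDF x := sub_pos.2 (stdNormalCDF_lt_one hx)
  have hmills : 0 < stdNormalPDF x / x := div_pos (stdNormalPDF_pos x) hx
  have hupper := log_le_log htail (one_sub_stdNormalCDF_le hx)
  have hlower : log (stdNormalPDF x / x) - log (1 + (x ^ 2)⁻¹) ≤ log (1 - stdNormalCDF x) := by
    rw [← log_div hmills.ne' (by positivity)]
    refine log_le_log (by positivity) (le_of_eq_of_le ?_
      (div_mul_stdNormalPDF_le_one_sub_stdNormalCDF x))
    field_simp
    ring
  have hlog : log (1 + (x ^ 2)⁻¹) ≤ (x ^ 2)⁻¹ := by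
    linarith [log_le_sub_one_of_pos (show 0 < 1 + (x ^ 2)⁻¹ by positivity)]
  have hinv : 0 < (x ^ 2)⁻¹ := by positivity
  rw [log_stdNormalPDF_div hx] at hupper hlower
  rw [abs_le]
  constructor <;> linarith

end StandardNormal

section Gumbel

/-- The distribution function `Λ(x) = exp(-e^{-x})` of the standard Gumbel law. -/
noncomputable def gumbelCDF (x : ℝ) : ℝ := exp (-exp (-x))

lemma gumbelCDF_nonneg (x : ℝ) : 0 ≤ gumbelCDF x := (exp_pos _).le

lemma gumbelCDF_le_one (x : ℝ) : gumbelCDF x ≤ 1 :=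
  exp_le_one_iff.2 (neg_nonpos.2 (exp_pos _).le)

lemma one_sub_gumbelCDF_le (x : ℝ) : 1 - gumbelCDF x ≤ exp (-x) := by
  linarith [one_sub_le_exp_neg (exp (-x)), gumbelCDF.eq_def x]

lemma gumbelCDF_le_exp (x : ℝ) : gumbelCDF x ≤ exp x :=
  exp_le_exp.2 (by linarith [add_one_le_exp (-x)])

lemma gumbelPDF_pos (x : ℝ) : 0 < gumbelPDF x := exp_pos _

lemma gumbelPDF_eq (x : ℝ) : gumbelPDF x = gumbelCDF x * exp (-x) := by
  rw [gumbelPDF, gumbelCDF, ← exp_add, neg_add_eq_sub]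

lemma hasDerivAt_gumbelCDF (x : ℝ) : HasDerivAt gumbelCDF (gumbelPDF x) x := by
  refine (hasDerivAt_neg x).exp.neg.exp.congr_deriv ?_
  rw [gumbelPDF_eq, gumbelCDF, mul_neg_one, neg_neg]
  rfl

lemma hasDerivAt_gumbelPDF (x : ℝ) :
    HasDerivAt gumbelPDF (gumbelPDF x * (exp (-x) - 1)) x :=
  ((hasDerivAt_neg x).sub (hasDerivAt_neg x).exp).exp.congr_deriv (by simp [gumbelPDF]; ring)

lemma abs_gumbelPDF_mul_exp_neg_sub_one_le_one (x : ℝ) : |gumbelPDF x * (exp (-x) - 1)| ≤ 1 := by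
  have ht := exp_pos (-x)
  rw [gumbelPDF_eq, gumbelCDF]
  generalize exp (-x) = t at ht
  rw [mul_assoc, exp_neg, abs_mul, abs_of_pos (by positivity), inv_mul_le_one₀ (exp_pos t), abs_le]
  constructor
  · nlinarith [add_one_le_exp t]
  · linarith [sq_sub_self_le_exp ht.le]

lemma lipschitzWith_gumbelPDF : LipschitzWith 1 gumbelPDF :=
  lipschitzWith_of_nnnorm_deriv_le (fun x ↦ (hasDerivAt_gumbelPDF x).differentiableAt) fun x ↦ by
    rw [(hasDerivAt_gumbelPDF x).deriv, ← NNReal.coe_le_coe, coe_nnnorm, norm_eq_abs]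
    exact abs_gumbelPDF_mul_exp_neg_sub_one_le_one x

lemma abs_gumbelCDF_sub_sub_add_mul_gumbelPDF_le (x h : ℝ) :
    |gumbelCDF (x - h) - gumbelCDF x + h * gumbelPDF x| ≤ h ^ 2 := by
  simpa using
    norm_sub_sub_smul_le_of_lipschitzWith_deriv hasDerivAt_gumbelCDF lipschitzWith_gumbelPDF x
      (x - h)

lemma gumbelPDF_le_exp_neg_abs (x : ℝ) : gumbelPDF x ≤ exp (-|x|) := by
  refine exp_le_exp.2 ?_
  rcases abs_cases x with ⟨habs, -⟩ | ⟨habs, -⟩ <;> rw [habs]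
  · linarith [exp_pos (-x)]
  · linarith [two_mul_le_exp (x := -x)]

lemma one_add_sq_mul_gumbelPDF_le (x : ℝ) : (1 + x ^ 2) * gumbelPDF x ≤ 2 := by
  have hexp : 1 + x ^ 2 ≤ 2 * exp |x| := by
    have := quadratic_le_exp_of_nonneg (abs_nonneg x)
    rw [sq_abs] at this
    linarith [abs_nonneg x]
  calc (1 + x ^ 2) * gumbelPDF x ≤ 2 * exp |x| * exp (-|x|) := by
        gcongr
        · exact (gumbelPDF_pos x).le
        · exact gumbelPDF_le_exp_neg_abs x
    _ = 2 := by rw [mul_assoc, ← exp_add, add_neg_cancel, exp_zero, mul_one]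

lemma abs_mul_gumbelPDF_le_one (x : ℝ) : |x| * gumbelPDF x ≤ 1 := by
  have h := one_add_sq_mul_gumbelPDF_le x
  rw [← sq_abs] at h
  nlinarith [mul_nonneg (sq_nonneg (|x| - 1)) (gumbelPDF_pos x).le]

/-- The constant `d₂ = sup_x |x| Λ'(x)`. -/
noncomputable def gumbelConst : ℝ := ⨆ x : ℝ, |x| * gumbelPDF x

lemma bddAbove_range_abs_mul_gumbelPDF : BddAbove (Set.range fun x ↦ |x| * gumbelPDF x) :=
  ⟨1, Set.forall_mem_range.2 abs_mul_gumbelPDF_le_one⟩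

lemma gumbelConst_pos : 0 < gumbelConst :=
  (mul_pos (abs_pos.2 one_ne_zero) (gumbelPDF_pos 1)).trans_le
    (le_ciSup bddAbove_range_abs_mul_gumbelPDF 1)

end Gumbel

section NormingSequences

lemma sq_aSeq (n : ℕ) : aSeq n ^ 2 = 2 * log n :=
  sq_sqrt (mul_nonneg zero_le_two (log_natCast_nonneg n))

lemma tendsto_aSeq : Tendsto aSeq atTop atTop :=
  tendsto_sqrt_atTop.comp
    ((tendsto_log_atTop.comp tendsto_natCast_atTop_atTop).const_mul_atTop two_pos)

lemma exp_sq_aSeq_div_two {n : ℕ} (hn : n ≠ 0) : exp (aSeq n ^ 2 / 2) = n := by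
  rw [sq_aSeq, mul_div_cancel_left₀ _ two_ne_zero, exp_log (by positivity)]

lemma cSeq_eq_log (n : ℕ) : cSeq n = log (√(2 * π) * aSeq n) := by
  rw [cSeq, aSeq, ← sqrt_mul (by positivity)]
  ring_nf

lemma exp_cSeq {n : ℕ} (ha : 0 < aSeq n) : exp (cSeq n) = √(2 * π) * aSeq n := by
  rw [cSeq_eq_log, exp_log (by positivity)]

lemma cSeq_eq {n : ℕ} (hn : 2 ≤ n) : cSeq n = (log (log n) + log (4 * π)) / 2 := by
  have hlog : 0 < log n := log_pos (by exact_mod_cast hn)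
  rw [cSeq, log_sqrt (by positivity), log_mul (by positivity) hlog.ne', add_comm]

lemma tendsto_sqrt_two_pi_mul_aSeq : Tendsto (fun n ↦ √(2 * π) * aSeq n) atTop atTop :=
  tendsto_aSeq.const_mul_atTop (by positivity)

lemma tendsto_cSeq : Tendsto cSeq atTop atTop := by
  rw [funext cSeq_eq_log]
  exact tendsto_log_atTop.comp tendsto_sqrt_two_pi_mul_aSeq

lemma sq_cSeq_isBigO_aSeq : (fun n ↦ cSeq n ^ 2) =O[atTop] aSeq := by
  simp_rw [cSeq_eq_log]
  exact (isLittleO_pow_log_id_atTop.comp_tendsto tendsto_sqrt_two_pi_mul_aSeq).isBigO.trans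
    (isBigO_const_mul_self _ _ _)

lemma one_isBigO_cSeq : (fun _ ↦ (1 : ℝ)) =O[atTop] cSeq :=
  ((isLittleO_const_left.2 <| .inr <| tendsto_norm_atTop_atTop.comp tendsto_cSeq)).isBigO

lemma cSeq_isBigO_sq_cSeq : cSeq =O[atTop] fun n ↦ cSeq n ^ 2 := by
  simpa [sq] using one_isBigO_cSeq.mul (isBigO_refl cSeq atTop)

lemma cSeq_isBigO_aSeq : cSeq =O[atTop] aSeq := cSeq_isBigO_sq_cSeq.trans sq_cSeq_isBigO_aSeq

lemma one_isBigO_aSeq : (fun _ ↦ (1 : ℝ)) =O[atTop] aSeq :=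
  one_isBigO_cSeq.trans cSeq_isBigO_aSeq

/-- The third-order part `η_n = (c_n² - 2c_n) / (2a_n²)` of the centering on the scale `1 / a_n`:
`b_n = a_n - (c_n + η_n) / a_n`. -/
noncomputable def etaSeq (n : ℕ) : ℝ := (cSeq n ^ 2 - 2 * cSeq n) / (2 * aSeq n ^ 2)

lemma etaSeq_mul_cSeq_isBigO_one : (fun n ↦ etaSeq n * cSeq n) =O[atTop] fun _ ↦ (1 : ℝ) := by
  have hnum : (fun n ↦ cSeq n ^ 2 - 2 * cSeq n) =O[atTop] aSeq :=
    sq_cSeq_isBigO_aSeq.sub (cSeq_isBigO_aSeq.const_mul_left 2)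
  have hden : (fun n ↦ (2 * aSeq n ^ 2)⁻¹) =O[atTop] fun n ↦ (aSeq n ^ 2)⁻¹ := by
    simpa only [mul_inv] using isBigO_const_mul_self _ _ _
  refine ((hnum.mul cSeq_isBigO_aSeq).mul hden).congr' ?_ ?_
  · exact .of_forall fun n ↦ by simp only [etaSeq]; ring
  · filter_upwards [tendsto_aSeq.eventually_gt_atTop 0] with n ha
    field_simp

lemma etaSeq_isBigO_one : etaSeq =O[atTop] fun _ ↦ (1 : ℝ) := by
  have h : etaSeq =O[atTop] fun n ↦ etaSeq n * cSeq n := by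
    simpa using (isBigO_refl etaSeq atTop).mul one_isBigO_cSeq
  exact h.trans etaSeq_mul_cSeq_isBigO_one

end NormingSequences

section Expansion

/-- The threshold `u_n(x) = b_n + x / a_n`. -/
noncomputable def gumbelThreshold (n : ℕ) (x : ℝ) : ℝ := bSeq3 n + x / aSeq n

/-- The relative displacement `r` of the threshold, `u_n(x) = a_n (1 + r)`. -/
noncomputable def relDisp (n : ℕ) (x : ℝ) : ℝ := (x - cSeq n - etaSeq n) / aSeq n ^ 2

/-- The shift `h` in `n (1 - Φ(u_n(x))) = exp(-(x - h))`, where the left side is the expected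
number of exceedances of the threshold. -/
noncomputable def gumbelShift (n : ℕ) (x : ℝ) : ℝ :=
  x + log (n * (1 - stdNormalCDF (gumbelThreshold n x)))

/-- What remains of `(a_n² - u_n(x)²) / 2` after `-x + c_n + r + c_n x / a_n²`, as a numerator over
`2 a_n²`. -/
noncomputable def quadRemainder (n : ℕ) (x : ℝ) : ℝ :=
  -x ^ 2 - 2 * x + 2 * (etaSeq n * x) - 2 * (etaSeq n * cSeq n) - etaSeq n ^ 2 + 2 * etaSeq n

lemma gumbelThreshold_eq {n : ℕ} (ha : aSeq n ≠ 0) (x : ℝ) :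
    gumbelThreshold n x = aSeq n * (1 + relDisp n x) := by
  rw [gumbelThreshold, bSeq3, relDisp, etaSeq]
  field_simp
  ring

lemma monotone_gumbelThreshold (n : ℕ) : Monotone (gumbelThreshold n) := fun x y hxy ↦ by
  have : 0 ≤ aSeq n := sqrt_nonneg _
  unfold gumbelThreshold
  gcongr

lemma exp_neg_mul_eq_gumbelCDF {n : ℕ} {x : ℝ} (hn : n ≠ 0) (hu : 0 < gumbelThreshold n x) :
    exp (-(n * (1 - stdNormalCDF (gumbelThreshold n x)))) = gumbelCDF (x - gumbelShift n x) := by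
  have htail := sub_pos.2 (stdNormalCDF_lt_one hu)
  rw [gumbelCDF, gumbelShift, neg_sub, add_sub_cancel_left, exp_log (by positivity)]

lemma half_sq_aSeq_sub_sq_gumbelThreshold {n : ℕ} (ha : aSeq n ≠ 0) (x : ℝ) :
    (aSeq n ^ 2 - gumbelThreshold n x ^ 2) / 2 = -x + cSeq n + relDisp n x
      + cSeq n / aSeq n ^ 2 * x + quadRemainder n x / (2 * aSeq n ^ 2) := by
  have heta : 2 * aSeq n ^ 2 * etaSeq n = cSeq n ^ 2 - 2 * cSeq n := by
    rw [etaSeq]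
    field_simp
  rw [gumbelThreshold_eq ha, relDisp, quadRemainder]
  field_simp
  linear_combination heta

lemma log_sqrt_two_pi_mul_gumbelThreshold {n : ℕ} {x : ℝ} (ha : 0 < aSeq n)
    (hr : 0 < 1 + relDisp n x) :
    log (√(2 * π) * gumbelThreshold n x) = cSeq n + log (1 + relDisp n x) := by
  rw [gumbelThreshold_eq ha.ne', ← mul_assoc, log_mul (by positivity) hr.ne', cSeq_eq_log]

lemma gumbelShift_sub_eq {n : ℕ} {x : ℝ} (ha : 0 < aSeq n) (hr : 0 < 1 + relDisp n x) :
    gumbelShift n x - cSeq n / aSeq n ^ 2 * x = quadRemainder n x / (2 * aSeq n ^ 2)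
      - (log (1 + relDisp n x) - relDisp n x)
      + (log (1 - stdNormalCDF (gumbelThreshold n x)) + gumbelThreshold n x ^ 2 / 2
        + log (√(2 * π) * gumbelThreshold n x)) := by
  have hu : 0 < gumbelThreshold n x := gumbelThreshold_eq ha.ne' x ▸ mul_pos ha hr
  have htail := sub_pos.2 (stdNormalCDF_lt_one hu)
  have hn : n ≠ 0 := by
    rintro rfl
    simp [aSeq] at ha
  have hlogn : log n = aSeq n ^ 2 / 2 := by rw [sq_aSeq]; ring
  rw [gumbelShift, log_mul (by positivity) htail.ne', hlogn,
    log_sqrt_two_pi_mul_gumbelThreshold ha hr]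
  linear_combination half_sq_aSeq_sub_sq_gumbelThreshold ha.ne' x

variable {ι : Type*} {l : Filter ι} {n : ι → ℕ} {x : ι → ℝ}

lemma eventually_aSeq_pos (hn : Tendsto n l atTop) : ∀ᶠ i in l, 0 < aSeq (n i) :=
  (tendsto_aSeq.comp hn).eventually_gt_atTop 0

lemma relDisp_isBigO (hn : Tendsto n l atTop) (hx : x =O[l] fun i ↦ cSeq (n i)) :
    (fun i ↦ relDisp (n i) (x i)) =O[l] fun i ↦ (aSeq (n i))⁻¹ := by
  have hc := cSeq_isBigO_aSeq.comp_tendsto hn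
  have heta := (etaSeq_isBigO_one.trans one_isBigO_aSeq).comp_tendsto hn
  refine ((((hx.trans hc).sub hc).sub heta).mul (isBigO_refl (fun i ↦ (aSeq (n i) ^ 2)⁻¹) l)).congr'
    .rfl ?_
  filter_upwards [eventually_aSeq_pos hn] with i ha
  simp only [Function.comp_apply]
  field_simp

lemma eventually_abs_relDisp_le (hn : Tendsto n l atTop) (hx : x =O[l] fun i ↦ cSeq (n i)) :
    ∀ᶠ i in l, |relDisp (n i) (x i)| ≤ 1 / 2 :=
  ((relDisp_isBigO hn hx).trans_tendsto
    (tendsto_aSeq.comp hn).inv_tendsto_atTop).norm.eventually_le_const (by norm_num)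

lemma eventually_aSeq_div_two_le_gumbelThreshold (hn : Tendsto n l atTop)
    (hx : x =O[l] fun i ↦ cSeq (n i)) :
    ∀ᶠ i in l, aSeq (n i) / 2 ≤ gumbelThreshold (n i) (x i) := by
  filter_upwards [eventually_aSeq_pos hn, eventually_abs_relDisp_le hn hx] with i ha hr
  rw [gumbelThreshold_eq ha.ne']
  nlinarith [neg_le_of_abs_le hr]

lemma log_one_add_relDisp_sub_isBigO (hn : Tendsto n l atTop)
    (hx : x =O[l] fun i ↦ cSeq (n i)) :
    (fun i ↦ log (1 + relDisp (n i) (x i)) - relDisp (n i) (x i)) =O[l]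
      fun i ↦ (aSeq (n i) ^ 2)⁻¹ := by
  have hsq : (fun i ↦ relDisp (n i) (x i) ^ 2) =O[l] fun i ↦ (aSeq (n i) ^ 2)⁻¹ := by
    simpa only [inv_pow] using (relDisp_isBigO hn hx).pow 2
  refine IsBigO.trans (.of_bound 2 ?_) hsq
  filter_upwards [eventually_abs_relDisp_le hn hx] with i hr
  simpa using abs_log_one_add_sub_le hr

lemma log_tail_gumbelThreshold_isBigO (hn : Tendsto n l atTop)
    (hx : x =O[l] fun i ↦ cSeq (n i)) :
    (fun i ↦ log (1 - stdNormalCDF (gumbelThreshold (n i) (x i)))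
      + gumbelThreshold (n i) (x i) ^ 2 / 2 + log (√(2 * π) * gumbelThreshold (n i) (x i))) =O[l]
      fun i ↦ (aSeq (n i) ^ 2)⁻¹ := by
  refine .of_bound 4 ?_
  filter_upwards [eventually_aSeq_pos hn, eventually_aSeq_div_two_le_gumbelThreshold hn hx]
    with i ha hu
  calc _ ≤ (gumbelThreshold (n i) (x i) ^ 2)⁻¹ :=
        abs_log_one_sub_stdNormalCDF_add_le (by linarith)
    _ ≤ ((aSeq (n i) / 2) ^ 2)⁻¹ := by gcongr
    _ = 4 * ‖(aSeq (n i) ^ 2)⁻¹‖ := by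
        rw [norm_of_nonneg (by positivity), div_pow, inv_div]
        ring

lemma quadRemainder_isBigO (hn : Tendsto n l atTop) (hx : x =O[l] fun i ↦ cSeq (n i)) :
    (fun i ↦ quadRemainder (n i) (x i)) =O[l] fun i ↦ 1 + x i ^ 2 := by
  have hone : (fun _ ↦ (1 : ℝ)) =O[l] fun i ↦ 1 + x i ^ 2 :=
    .of_norm_le fun i ↦ by simp [sq_nonneg]
  have hsq : (fun i ↦ x i ^ 2) =O[l] fun i ↦ 1 + x i ^ 2 :=
    .of_norm_le fun i ↦ by simp
  have hlin : x =O[l] fun i ↦ 1 + x i ^ 2 := .of_norm_le fun i ↦ by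
    rw [norm_eq_abs, ← sq_abs]
    nlinarith [sq_nonneg (|x i| - 1), abs_nonneg (x i)]
  have heta := etaSeq_isBigO_one.comp_tendsto hn
  have hetac := etaSeq_mul_cSeq_isBigO_one.comp_tendsto hn
  have hetax : (fun i ↦ etaSeq (n i) * x i) =O[l] fun _ ↦ (1 : ℝ) :=
    ((isBigO_refl (fun i ↦ etaSeq (n i)) l).mul hx).trans hetac
  have hetasq : (fun i ↦ etaSeq (n i) ^ 2) =O[l] fun _ ↦ (1 : ℝ) := by
    simpa using heta.pow 2
  exact ((((hsq.neg_left.sub (hlin.const_mul_left 2)).add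
    ((hetax.trans hone).const_mul_left 2)).sub ((hetac.trans hone).const_mul_left 2)).sub
    (hetasq.trans hone)).add ((heta.trans hone).const_mul_left 2)

lemma gumbelShift_sub_isBigO (hn : Tendsto n l atTop) (hx : x =O[l] fun i ↦ cSeq (n i)) :
    (fun i ↦ gumbelShift (n i) (x i) - cSeq (n i) / aSeq (n i) ^ 2 * x i) =O[l]
      fun i ↦ (1 + x i ^ 2) * (aSeq (n i) ^ 2)⁻¹ := by
  have hinv : (fun i ↦ (aSeq (n i) ^ 2)⁻¹) =O[l] fun i ↦ (1 + x i ^ 2) * (aSeq (n i) ^ 2)⁻¹ :=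
    .of_norm_le fun i ↦ by
      rw [norm_of_nonneg (by positivity)]
      exact le_mul_of_one_le_left (by positivity) (le_add_of_nonneg_right (sq_nonneg _))
  have hquad := (quadRemainder_isBigO hn hx).mul
    (isBigO_const_mul_self (2 : ℝ)⁻¹ (fun i ↦ (aSeq (n i) ^ 2)⁻¹) l)
  refine ((hquad.sub ((log_one_add_relDisp_sub_isBigO hn hx).trans hinv)).add
    ((log_tail_gumbelThreshold_isBigO hn hx).trans hinv)).congr' ?_ .rfl
  filter_upwards [eventually_aSeq_pos hn, eventually_abs_relDisp_le hn hx] with i ha hr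
  rw [gumbelShift_sub_eq ha (by linarith [neg_le_of_abs_le hr])]
  ring

lemma gumbelShift_sq_isBigO (hn : Tendsto n l atTop) (hx : x =O[l] fun i ↦ cSeq (n i)) :
    (fun i ↦ gumbelShift (n i) (x i) ^ 2) =O[l] fun i ↦ (aSeq (n i) ^ 2)⁻¹ := by
  have hsq : (fun i ↦ cSeq (n i) ^ 2) =O[l] fun i ↦ aSeq (n i) :=
    sq_cSeq_isBigO_aSeq.comp_tendsto hn
  have hone : (fun _ ↦ (1 : ℝ)) =O[l] fun i ↦ aSeq (n i) := one_isBigO_aSeq.comp_tendsto hn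
  have hinv := isBigO_refl (fun i ↦ (aSeq (n i) ^ 2)⁻¹) l
  have hmain : (fun i ↦ cSeq (n i) / aSeq (n i) ^ 2 * x i) =O[l]
      fun i ↦ aSeq (n i) * (aSeq (n i) ^ 2)⁻¹ := by
    refine IsBigO.congr_left (IsBigO.mul ?_ hinv) (f₁ := fun i ↦ cSeq (n i) * x i * _)
      fun i ↦ by ring
    exact ((isBigO_refl _ l).mul hx).trans (by simpa only [sq] using hsq)
  have hrem : (fun i ↦ (1 + x i ^ 2) * (aSeq (n i) ^ 2)⁻¹) =O[l]
      fun i ↦ aSeq (n i) * (aSeq (n i) ^ 2)⁻¹ := (hone.add ((hx.pow 2).trans hsq)).mul hinv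
  refine ((((gumbelShift_sub_isBigO hn hx).trans hrem).add hmain).pow 2).congr'
    (.of_forall fun i ↦ by simp) ?_
  filter_upwards [eventually_aSeq_pos hn] with i ha
  field_simp

end Expansion

section UniformEstimate

/-- The expansion `Λ(x) - (c_n / a_n²) x Λ'(x)` of the distribution function of the normalised
maximum to order `1 / a_n²`. -/
noncomputable def gumbelExpansion (n : ℕ) (x : ℝ) : ℝ :=
  gumbelCDF x - cSeq n / aSeq n ^ 2 * (x * gumbelPDF x)

section AlongFilter

variable {ι : Type*} {l : Filter ι} {n : ι → ℕ} {x : ι → ℝ}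

lemma pow_stdNormalCDF_sub_gumbelCDF_isBigO (hn : Tendsto n l atTop)
    (hx : x =O[l] fun i ↦ cSeq (n i)) :
    (fun i ↦ stdNormalCDF (gumbelThreshold (n i) (x i)) ^ n i
      - gumbelCDF (x i - gumbelShift (n i) (x i))) =O[l] fun i ↦ (aSeq (n i) ^ 2)⁻¹ := by
  refine .of_bound 4 ?_
  filter_upwards [hn.eventually_ne_atTop 0, eventually_aSeq_pos hn,
    eventually_aSeq_div_two_le_gumbelThreshold hn hx] with i hn₀ ha hu
  set u := gumbelThreshold (n i) (x i)
  have h := abs_one_sub_pow_sub_exp_le (sub_nonneg.2 (stdNormalCDF_le_one u))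
    (sub_le_self 1 (stdNormalCDF_nonneg u)) hn₀
  rw [sub_sub_cancel, exp_neg_mul_eq_gumbelCDF hn₀ (by linarith)] at h
  calc _ ≤ (2 : ℝ) / n i := h
    _ ≤ 2 / (aSeq (n i) ^ 2 / 2) := by
        gcongr
        rw [← exp_sq_aSeq_div_two hn₀]
        linarith [add_one_le_exp (aSeq (n i) ^ 2 / 2)]
    _ = 4 * ‖(aSeq (n i) ^ 2)⁻¹‖ := by
        rw [norm_of_nonneg (by positivity)]
        field_simp
        norm_num

lemma gumbelShift_sub_mul_gumbelPDF_isBigO (hn : Tendsto n l atTop)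
    (hx : x =O[l] fun i ↦ cSeq (n i)) :
    (fun i ↦ (gumbelShift (n i) (x i) - cSeq (n i) / aSeq (n i) ^ 2 * x i) * gumbelPDF (x i)) =O[l]
      fun i ↦ (aSeq (n i) ^ 2)⁻¹ := by
  have hbounded : (fun i ↦ (1 + x i ^ 2) * gumbelPDF (x i)) =O[l] fun _ ↦ (1 : ℝ) :=
    .of_bound 2 <| .of_forall fun i ↦ by
      have := gumbelPDF_pos (x i)
      rw [norm_of_nonneg (by positivity), norm_one, mul_one]
      exact one_add_sq_mul_gumbelPDF_le (x i)
  calc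
    _ =O[l] fun i ↦ (1 + x i ^ 2) * (aSeq (n i) ^ 2)⁻¹ * gumbelPDF (x i) :=
        (gumbelShift_sub_isBigO hn hx).mul (isBigO_refl _ l)
    _ =O[l] fun i ↦ (aSeq (n i) ^ 2)⁻¹ := by
        simpa only [one_mul, mul_right_comm] using
          hbounded.mul (isBigO_refl (fun i ↦ (aSeq (n i) ^ 2)⁻¹) l)

lemma pow_stdNormalCDF_sub_gumbelExpansion_isBigO (hn : Tendsto n l atTop)
    (hx : x =O[l] fun i ↦ cSeq (n i)) :
    (fun i ↦ stdNormalCDF (gumbelThreshold (n i) (x i)) ^ n i - gumbelExpansion (n i) (x i)) =O[l]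
      fun i ↦ (aSeq (n i) ^ 2)⁻¹ := by
  have htaylor : (fun i ↦ gumbelCDF (x i - gumbelShift (n i) (x i)) - gumbelCDF (x i)
      + gumbelShift (n i) (x i) * gumbelPDF (x i)) =O[l] fun i ↦ (aSeq (n i) ^ 2)⁻¹ :=
    (IsBigO.of_norm_le fun i ↦ abs_gumbelCDF_sub_sub_add_mul_gumbelPDF_le _ _).trans
      (gumbelShift_sq_isBigO hn hx)
  refine (((pow_stdNormalCDF_sub_gumbelCDF_isBigO hn hx).add htaylor).sub
    (gumbelShift_sub_mul_gumbelPDF_isBigO hn hx)).congr_left fun i ↦ ?_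
  rw [gumbelExpansion]
  ring

end AlongFilter

lemma exp_neg_two_mul_cSeq_le {n : ℕ} (ha : 0 < aSeq n) :
    exp (-(2 * cSeq n)) ≤ (aSeq n ^ 2)⁻¹ := by
  rw [two_mul, neg_add, exp_add, exp_neg, exp_cSeq ha, ← mul_inv, ← sq, mul_pow,
    sq_sqrt two_pi_pos.le]
  gcongr
  exact le_mul_of_one_le_left (by positivity) (by linarith [pi_gt_three])

lemma cSeq_div_sq_mul_abs_mul_gumbelPDF_le {n : ℕ} {x : ℝ} (hc : 0 ≤ cSeq n)
    (hx : 2 * cSeq n ≤ |x|) :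
    |cSeq n / aSeq n ^ 2 * (x * gumbelPDF x)| ≤ (aSeq n ^ 2)⁻¹ := by
  have hpdf := gumbelPDF_pos x
  have hweight : cSeq n * (|x| * gumbelPDF x) ≤ 1 := by
    have h := one_add_sq_mul_gumbelPDF_le x
    rw [← sq_abs] at h
    nlinarith [mul_nonneg (sub_nonneg.2 hx) (mul_nonneg (abs_nonneg x) hpdf.le)]
  rw [abs_mul, abs_mul, abs_of_pos hpdf, abs_of_nonneg (by positivity), div_eq_inv_mul, mul_assoc]
  exact mul_le_of_le_one_right (by positivity) hweight

lemma abs_gumbelExpansion_le {n : ℕ} {x : ℝ} (ha : 0 < aSeq n) (hc : 0 ≤ cSeq n)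
    (hx : x ≤ -(2 * cSeq n)) : |gumbelExpansion n x| ≤ 2 * (aSeq n ^ 2)⁻¹ := by
  have hcdf : gumbelCDF x ≤ (aSeq n ^ 2)⁻¹ :=
    (gumbelCDF_le_exp x).trans <| (exp_le_exp.2 hx).trans (exp_neg_two_mul_cSeq_le ha)
  have hcorr := cSeq_div_sq_mul_abs_mul_gumbelPDF_le hc (le_abs.2 (.inr (le_neg_of_le_neg hx)))
  calc |gumbelExpansion n x|
      ≤ |gumbelCDF x| + |cSeq n / aSeq n ^ 2 * (x * gumbelPDF x)| := abs_sub _ _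
    _ ≤ 2 * (aSeq n ^ 2)⁻¹ := by
        rw [abs_of_nonneg (gumbelCDF_nonneg x)]
        linarith

lemma abs_one_sub_gumbelExpansion_le {n : ℕ} {x : ℝ} (ha : 0 < aSeq n) (hc : 0 ≤ cSeq n)
    (hx : 2 * cSeq n ≤ x) : |1 - gumbelExpansion n x| ≤ 2 * (aSeq n ^ 2)⁻¹ := by
  have hcdf : 1 - gumbelCDF x ≤ (aSeq n ^ 2)⁻¹ :=
    (one_sub_gumbelCDF_le x).trans <|
      (exp_le_exp.2 (neg_le_neg hx)).trans (exp_neg_two_mul_cSeq_le ha)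
  have hcorr := cSeq_div_sq_mul_abs_mul_gumbelPDF_le hc (le_abs.2 (.inl hx))
  calc |1 - gumbelExpansion n x|
      = |1 - gumbelCDF x + cSeq n / aSeq n ^ 2 * (x * gumbelPDF x)| := by
        rw [gumbelExpansion, sub_add]
    _ ≤ |1 - gumbelCDF x| + |cSeq n / aSeq n ^ 2 * (x * gumbelPDF x)| := abs_add_le _ _
    _ ≤ 2 * (aSeq n ^ 2)⁻¹ := by
        rw [abs_of_nonneg (sub_nonneg.2 (gumbelCDF_le_one x))]
        linarith

-- The estimate along an arbitrary filter is applied to the pairs `(n, x)` with `|x| ≤ 2 c_n` as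
-- `n → ∞`, which makes its constant independent of `x`.
lemma exists_forall_mem_Icc_abs_pow_stdNormalCDF_sub_gumbelExpansion_le :
    ∃ C, ∀ᶠ n in atTop, ∀ x ∈ Set.Icc (-(2 * cSeq n)) (2 * cSeq n),
      |stdNormalCDF (gumbelThreshold n x) ^ n - gumbelExpansion n x| ≤ C * (aSeq n ^ 2)⁻¹ := by
  let l : Filter (ℕ × ℝ) := comap Prod.fst atTop ⊓
    𝓟 {p | p.2 ∈ Set.Icc (-(2 * cSeq p.1)) (2 * cSeq p.1)}
  have hn : Tendsto Prod.fst l atTop := tendsto_comap.mono_left inf_le_left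
  have hx : Prod.snd =O[l] fun p ↦ cSeq p.1 := by
    refine .of_bound 2 (eventually_inf_principal.2 (.of_forall fun p hp ↦ ?_))
    have := abs_le.2 hp
    exact this.trans (by gcongr; exact le_abs_self _)
  obtain ⟨C, hC⟩ := (pow_stdNormalCDF_sub_gumbelExpansion_isBigO hn hx).bound
  refine ⟨C, ?_⟩
  rw [eventually_inf_principal, eventually_comap] at hC
  filter_upwards [hC] with n hn x hx
  simpa only [norm_eq_abs, norm_inv, norm_pow, sq_abs] using hn (n, x) rfl hx

lemma exists_forall_abs_pow_stdNormalCDF_sub_gumbelExpansion_le :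
    ∃ C, ∀ᶠ n in atTop, ∀ x,
      |stdNormalCDF (gumbelThreshold n x) ^ n - gumbelExpansion n x| ≤ C * (aSeq n ^ 2)⁻¹ := by
  obtain ⟨C, hC⟩ := exists_forall_mem_Icc_abs_pow_stdNormalCDF_sub_gumbelExpansion_le
  refine ⟨3 * max C 2, ?_⟩
  filter_upwards [hC, eventually_aSeq_pos tendsto_id, tendsto_cSeq.eventually_ge_atTop 0]
    with n hmid ha hc x
  have hinv : 0 ≤ (aSeq n ^ 2)⁻¹ := by positivity
  have hC_le := mul_le_mul_of_nonneg_right (le_max_left C 2) hinv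
  have htwo_le := mul_le_mul_of_nonneg_right (le_max_right C 2) hinv
  rw [mul_assoc]
  refine abs_sub_le_of_monotone_of_abs_sub_le
    (F := fun x ↦ stdNormalCDF (gumbelThreshold n x) ^ n) ?_
    (fun x ↦ pow_nonneg (stdNormalCDF_nonneg _) n)
    (fun x ↦ pow_le_one₀ (stdNormalCDF_nonneg _) (stdNormalCDF_le_one _))
    (show -(2 * cSeq n) ≤ 2 * cSeq n by linarith)
    (fun x hx ↦ (hmid x hx).trans hC_le)
    (fun x hx ↦ (abs_gumbelExpansion_le ha hc hx).trans htwo_le)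
    (fun x hx ↦ (abs_one_sub_gumbelExpansion_le ha hc hx).trans htwo_le) x
  exact fun x y hxy ↦ pow_le_pow_left₀ (stdNormalCDF_nonneg _)
    (monotone_stdNormalCDF (monotone_gumbelThreshold n hxy)) n

/-- The uniform distance between the distribution function of the normalised maximum of `n`
standard normal variables and the Gumbel distribution function. -/
noncomputable def gumbelDist (n : ℕ) : ℝ :=
  ⨆ x, |stdNormalCDF (gumbelThreshold n x) ^ n - gumbelCDF x|

lemma abs_gumbelExpansion_sub_gumbelCDF {n : ℕ} (hc : 0 ≤ cSeq n) (x : ℝ) :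
    |gumbelExpansion n x - gumbelCDF x| = cSeq n / aSeq n ^ 2 * (|x| * gumbelPDF x) := by
  rw [gumbelExpansion, sub_sub_cancel_left, abs_neg, abs_mul, abs_mul, abs_of_pos (gumbelPDF_pos x),
    abs_of_nonneg (by positivity)]

lemma gumbelDist_sub_isBigO :
    (fun n ↦ gumbelDist n - cSeq n / aSeq n ^ 2 * gumbelConst) =O[atTop]
      fun n ↦ (aSeq n ^ 2)⁻¹ := by
  obtain ⟨C, hC⟩ := exists_forall_abs_pow_stdNormalCDF_sub_gumbelExpansion_le
  refine .of_bound C ?_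
  filter_upwards [hC, tendsto_cSeq.eventually_ge_atTop 0] with n hn hc
  have hcoeff : 0 ≤ cSeq n / aSeq n ^ 2 := by positivity
  rw [gumbelConst, mul_iSup_of_nonneg hcoeff, norm_of_nonneg (by positivity : 0 ≤ (aSeq n ^ 2)⁻¹)]
  refine abs_iSup_sub_iSup_le ⟨cSeq n / aSeq n ^ 2, Set.forall_mem_range.2 fun x ↦ ?_⟩ fun x ↦ ?_
  · exact mul_le_of_le_one_right hcoeff (abs_mul_gumbelPDF_le_one x)
  · rw [← abs_gumbelExpansion_sub_gumbelCDF hc]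
    refine (abs_abs_sub_abs_le _ _).trans ?_
    rw [sub_sub_sub_cancel_right]
    exact hn x

lemma gumbelDist_sub_gumbelConst_mul_isBigO :
    (fun n : ℕ ↦ gumbelDist n - gumbelConst * log (log n) / (4 * log n)) =O[atTop]
      fun n : ℕ ↦ (log n)⁻¹ := by
  have hinv : (fun n ↦ (aSeq n ^ 2)⁻¹) =O[atTop] fun n : ℕ ↦ (log n)⁻¹ := by
    simpa only [sq_aSeq, mul_inv] using isBigO_const_mul_self _ _ _
  refine ((gumbelDist_sub_isBigO.trans hinv).add
    (isBigO_const_mul_self (gumbelConst * log (4 * π) / 4) (fun n : ℕ ↦ (log n)⁻¹) atTop)).congr' ?_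
    .rfl
  filter_upwards [eventually_ge_atTop 2] with n hn
  rw [cSeq_eq hn, sq_aSeq]
  ring

lemma tendsto_log_log_natCast : Tendsto (fun n : ℕ ↦ log (log n)) atTop atTop :=
  tendsto_log_atTop.comp (tendsto_log_atTop.comp tendsto_natCast_atTop_atTop)

lemma gumbelDist_isEquivalent :
    gumbelDist ~[atTop] fun n : ℕ ↦ gumbelConst * log (log n) / (4 * log n) := by
  refine gumbelDist_sub_gumbelConst_mul_isBigO.trans_isLittleO ?_
  have hlog : (fun _ : ℕ ↦ (1 : ℝ)) =o[atTop] fun n : ℕ ↦ gumbelConst / 4 * log (log n) :=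
    isLittleO_const_left.2 <| .inr <| tendsto_norm_atTop_atTop.comp <|
      tendsto_log_log_natCast.const_mul_atTop (div_pos gumbelConst_pos four_pos)
  exact (hlog.mul_isBigO (isBigO_refl (fun n : ℕ ↦ (log n)⁻¹) atTop)).congr
    (fun n ↦ one_mul _) fun n ↦ by ring

end UniformEstimate

/-- With the refined centering `b_n = a_n - c_n/a_n - (c_n² - 2c_n)/(2a_n³)`,
`sup_x |P(X_{(n)} ≤ b_n + x/a_n) - exp(-e^{-x})| = (d₂ log log n/(4 log n)) (1 + o(1))`
where `d₂ = sup_x |x| exp(-e^{-x}) e^{-x}`. -/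
theorem refined_berryEsseen :
    Tendsto (fun n : ℕ =>
        (⨆ x : ℝ, |stdNormalCDF (bSeq3 n + x / aSeq n) ^ n - Real.exp (-Real.exp (-x))|) /
          ((⨆ x : ℝ, |x| * Real.exp (-Real.exp (-x)) * Real.exp (-x)) *
            Real.log (Real.log n) / (4 * Real.log n)))
      atTop (nhds 1) := by
  have hconst : ⨆ x : ℝ, |x| * exp (-exp (-x)) * exp (-x) = gumbelConst := by
    simp only [gumbelConst, gumbelPDF_eq, gumbelCDF, mul_assoc]
  have hne : ∀ᶠ n : ℕ in atTop, gumbelConst * log (log n) / (4 * log n) ≠ 0 := by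
    filter_upwards [tendsto_log_log_natCast.eventually_gt_atTop 0, eventually_ge_atTop 2]
      with n hloglog hn
    have hlog : 0 < log n := log_pos (by exact_mod_cast hn)
    have := gumbelConst_pos
    positivity
  rw [hconst]
  exact (isEquivalent_iff_tendsto_one hne).1 gumbelDist_isEquivalent
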